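/- Let n ≥ 2, q > 0, and let a_1, …, a_n be real numbers forming an arithmetic progression, i.e., a_1 − a_2 = a_2 − a_3 = … = a_{n−1} − a_n. Then for every x = (x_1,…,x_n) ∈ ℝ^n, a_1 (x_1^*)^q + … + a_n (x_n^*)^q = a_n (|x_1|^q + … + |x_n|^q) + (a_{n−1} − a_n) Σ_{1 ≤ i < j ≤ n} max(|x_i|,|x_j|)^q. -/

import Mathlib

/-!
Both sides are invariant under permuting the entries of `x`: the sum over pairs `i < j` of a
symmetric function is half of the full double sum minus its diagonal
(`two_mul_sum_lt`), hence can be reindexed by any permutation (`sum_lt_perm`). So `x` may be replaced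
by its rearrangement `x^*`, for which `max (x_i^*) (x_j^*) = x_i^*` when `i < j`. The pair sum then
counts `(x_i^*)^q` once for every `j > i`, i.e. `n - i` times for the one-based index `i`, and
`a_i = a_n + (n - i) (a_{n-1} - a_n)` for an arithmetic progression.
-/

/-- The non-increasing rearrangement of `(|x 0|, …, |x (n-1)|)`. -/
noncomputable def dstar {n : ℕ} (x : Fin n → ℝ) : Fin n → ℝ :=
  fun i => |x (Tuple.sort (fun j => -|x j|) i)|

theorem two_mul_sum_lt {n : ℕ} (f : Fin n → Fin n → ℝ) (hf : ∀ i j, f i j = f j i) :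
    2 * ∑ p ∈ Finset.univ.filter (fun p : Fin n × Fin n => p.1 < p.2), f p.1 p.2 =
      ∑ i, ∑ j, f i j - ∑ i, f i i := by
  have h1 : ∑ p ∈ Finset.univ.filter (fun p : Fin n × Fin n => p.1 < p.2), f p.1 p.2 =
      ∑ i, ∑ j, if i < j then f i j else 0 := by
    rw [Finset.sum_filter, Fintype.sum_prod_type]
  have h2 : ∑ i, ∑ j, (if i < j then f i j else 0) = ∑ i, ∑ j, if j < i then f i j else 0 := by
    rw [Finset.sum_comm]
    simp only [hf]
  have h3 : ∑ i, f i i = ∑ i, ∑ j, if i = j then f i j else 0 := by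
    simp
  rw [two_mul, h1]
  nth_rewrite 2 [h2]
  rw [h3, ← Finset.sum_add_distrib, ← Finset.sum_sub_distrib]
  refine Finset.sum_congr rfl fun i _ => ?_
  rw [← Finset.sum_add_distrib, ← Finset.sum_sub_distrib]
  refine Finset.sum_congr rfl fun j _ => ?_
  rcases lt_trichotomy i j with h | h | h
  · simp [h, h.not_gt, h.ne]
  · simp [h]
  · simp [h, h.not_gt, h.ne']

theorem sum_lt_perm {n : ℕ} (f : Fin n → Fin n → ℝ) (hf : ∀ i j, f i j = f j i)
    (σ : Equiv.Perm (Fin n)) :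
    ∑ p ∈ Finset.univ.filter (fun p : Fin n × Fin n => p.1 < p.2), f (σ p.1) (σ p.2) =
      ∑ p ∈ Finset.univ.filter (fun p : Fin n × Fin n => p.1 < p.2), f p.1 p.2 := by
  have h1 := two_mul_sum_lt f hf
  have h2 := two_mul_sum_lt (fun i j => f (σ i) (σ j)) fun i j => hf _ _
  have h3 : ∑ i, ∑ j, f (σ i) (σ j) = ∑ i, ∑ j, f i j := by
    rw [← Equiv.sum_comp σ (fun i => ∑ j, f i j)]
    exact Finset.sum_congr rfl fun i _ => Equiv.sum_comp σ (fun j => f (σ i) j)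
  have h4 : ∑ i, f (σ i) (σ i) = ∑ i, f i i := Equiv.sum_comp σ (fun i => f i i)
  linarith

theorem dstar_antitone {n : ℕ} (x : Fin n → ℝ) : Antitone (dstar x) := by
  intro i j hij
  have := Tuple.monotone_sort (fun j => -|x j|) hij
  simpa [dstar] using this

/-- The explicit form of an arithmetic progression, counted backwards from its last term. -/
theorem arith_prog_backward {n : ℕ} (a : ℕ → ℝ)
    (hAP : ∀ i, 1 ≤ i → i + 2 ≤ n → a i - a (i + 1) = a (i + 1) - a (i + 2)) (k : ℕ) :
    k + 1 ≤ n → a (n - k) = a n + k * (a (n - 1) - a n) := by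
  induction k using Nat.strong_induction_on with
  | _ k ih =>
    intro hk
    match k, ih, hk with
    | 0, _, _ => simp
    | 1, _, _ => simp
    | m + 2, ih, hk =>
      have h1 := ih (m + 1) (by omega) (by omega)
      have h2 := ih m (by omega) (by omega)
      have h := hAP (n - (m + 2)) (by omega) (by omega)
      rw [show n - (m + 2) + 1 = n - (m + 1) by omega,
        show n - (m + 2) + 2 = n - m by omega] at h
      push_cast at h1 ⊢
      linarith

/-- Formula (11): if `a_1, …, a_n` form an arithmetic progression, then
`∑ aₖ (xₖ^*)^q = a_n ∑ |xᵢ|^q + (a_{n−1} − a_n) ∑_{i<j} max(|xᵢ|,|xⱼ|)^q`. -/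
theorem stmt12 (n : ℕ) (hn : 2 ≤ n) (q : ℝ) (hq : 0 < q)
    (a : ℕ → ℝ)
    (hAP : ∀ i, 1 ≤ i → i + 2 ≤ n → a i - a (i + 1) = a (i + 1) - a (i + 2))
    (x : Fin n → ℝ) :
    ∑ i : Fin n, a (i.1 + 1) * dstar x i ^ q =
      a n * (∑ i : Fin n, |x i| ^ q) +
      (a (n - 1) - a n) *
        ∑ p ∈ Finset.univ.filter (fun p : Fin n × Fin n => p.1 < p.2),
          (max |x p.1| |x p.2|) ^ q := by
  have hsum : ∑ i : Fin n, |x i| ^ q = ∑ i, dstar x i ^ q :=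
    (Equiv.sum_comp (Tuple.sort (fun j => -|x j|)) (fun i => |x i| ^ q)).symm
  have hpair : ∑ p ∈ Finset.univ.filter (fun p : Fin n × Fin n => p.1 < p.2),
      (max |x p.1| |x p.2|) ^ q = ∑ i : Fin n, ((n - 1 - i.1 : ℕ) : ℝ) * dstar x i ^ q := by
    rw [← sum_lt_perm (fun i j => (max |x i| |x j|) ^ q)
      (fun i j => by rw [max_comm]) (Tuple.sort (fun j => -|x j|)),
      Finset.sum_filter, Fintype.sum_prod_type]
    refine Finset.sum_congr rfl fun i _ => ?_
    calc _ = ∑ j, if i < j then dstar x i ^ q else 0 := by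
          refine Finset.sum_congr rfl fun j _ => ?_
          split_ifs with h
          · exact congrArg (· ^ q) (max_eq_left (dstar_antitone x h.le))
          · rfl
      _ = _ := by
          rw [← Finset.sum_filter, Finset.sum_const, nsmul_eq_mul, Finset.filter_lt_eq_Ioi,
            Fin.card_Ioi]
  rw [hsum, hpair, Finset.mul_sum, Finset.mul_sum, ← Finset.sum_add_distrib]
  refine Finset.sum_congr rfl fun i _ => ?_
  have h := arith_prog_backward a hAP (n - 1 - i.1) (by omega)
  rw [show n - (n - 1 - i.1) = i.1 + 1 by omega] at h
  rw [h]
  ring
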